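/- Let A = {a,b,c}, m ≥ 4, and x₁, x₂, y₁, y₂ ≥ 1 with x₁ + x₂ = y₁ + y₂ = m - 3. If x₁ and y₁ are both even and y₁ ≤ x₂ ≤ x₁, then the set {a⋄^{m-2}a, b⋄^{m-2}b, c⋄^{m-2}c, a⋄^{x₁}b⋄^{x₂}b, b⋄^{y₁}b⋄^{y₂}c, a⋄^{m-2}c} is avoidable, and moreover avoidable by a two-sided infinite word whose period is at most m. -/

import Mathlib

/-- The three-letter alphabet. -/
inductive ABC | a | b | c
deriving DecidableEq
open ABC

/-- A partial word of length `m` over alphabet `A`. -/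
abbrev PW (m : ℕ) (A : Type) := Fin m → Option A

/-- A two-sided infinite word `w` meets a partial word `u`. -/
def Meets {m : ℕ} {A : Type} (w : ℤ → A) (u : PW m A) : Prop :=
  ∃ i : ℤ, ∀ j : Fin m, ∀ x : A, u j = some x → w (i + (j : ℕ)) = x

/-- A set of partial words is unavoidable over `A`. -/
def Unavoidable {m : ℕ} {A : Type} (X : Set (PW m A)) : Prop :=
  ∀ w : ℤ → A, ∃ u ∈ X, Meets w u

/-- A set of partial words is avoidable over `A`. -/
def Avoidable {m : ℕ} {A : Type} (X : Set (PW m A)) : Prop :=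
  ∃ w : ℤ → A, ∀ u ∈ X, ¬ Meets w u

/-- The partial word `x ⋄^(m-2) y` of length `m`: first letter `x`, last letter `y`,
holes in between. -/
def oneHole {A : Type} (m : ℕ) (x y : A) : PW m A :=
  fun j => if (j : ℕ) = 0 then some x else if (j : ℕ) = m - 1 then some y else none

/-- The partial word `x ⋄^(p-1) d ⋄^(m-p-2) y` of length `m`: first letter `x`,
letter `d` at position `p`, last letter `y`, holes elsewhere. -/
def twoDef {A : Type} (m : ℕ) (x d y : A) (p : ℕ) : PW m A :=
  fun j => if (j : ℕ) = 0 then some x else if (j : ℕ) = p then some d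
    else if (j : ℕ) = m - 1 then some y else none

/-- The two-sided infinite word of period `P` repeating the block `f` (given on `[0, P)`). -/
def periodic {A : Type} (P : ℕ) (f : ℕ → A) : ℤ → A :=
  fun i => f ((i % (P : ℤ)).toNat)

/-!
In a word of period `m`, the letter `m - 1` places after position `i + 1` is the letter at
position `i`. So `x⋄^(m-2)y` is met exactly when `yx` is a factor, and `x⋄^(p-1)d⋄^(m-p-2)y`
exactly when some factor `yx` has a `d` at distance `p` after its `x`. One has to find a cyclic word
of length `m` without the factors `aa`, `bb`, `cc`, `ca`, in which no `ba` is followed by a `b` at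
distance `x₁ + 1` from its `a`, and no `cb` by a `b` at distance `y₁ + 1` from its own `b`.

For even `m`, the word `(bc)^(m/2)` works: two occurrences of `b` are never at the odd distance
`y₁ + 1`. For odd `m`, write `m = x₁ + x₂ + 3` and take `(bc)^(x₂/2) (ba)^(x₁/2+1) c`, where `b`
occupies the even positions other than the last. From an `a`, `x₁ + 1` steps lead to the final `c`
or across it to an odd position. A letter preceded by `c` is at an even position at most `x₂`, and
since `y₁ ≤ x₁`, `y₁ + 1` steps from there lead to an odd position without crossing its end.
-/

section Meets

variable {A : Type} {m p : ℕ} {w : ℤ → A} {x d y : A}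

lemma meets_oneHole_iff (hm : 2 ≤ m) :
    Meets w (oneHole m x y) ↔ ∃ i : ℤ, w i = x ∧ w (i + (m - 1)) = y := by
  have hlast : ((m - 1 : ℕ) : ℤ) = m - 1 := by omega
  refine exists_congr fun i ↦ ⟨fun h ↦ ⟨?_, ?_⟩, ?_⟩
  · simpa using h ⟨0, by omega⟩ x (by simp [oneHole])
  · rw [← hlast]
    exact h ⟨m - 1, by omega⟩ y (by simp [oneHole, show m - 1 ≠ 0 by omega])
  · rintro ⟨hx, hy⟩ j z hz
    unfold oneHole at hz
    split_ifs at hz <;> simp_all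

lemma meets_twoDef_iff (hp : 0 < p) (hpm : p + 1 < m) :
    Meets w (twoDef m x d y p) ↔ ∃ i : ℤ, w i = x ∧ w (i + p) = d ∧ w (i + (m - 1)) = y := by
  have hlast : ((m - 1 : ℕ) : ℤ) = m - 1 := by omega
  refine exists_congr fun i ↦ ⟨fun h ↦ ⟨?_, ?_, ?_⟩, ?_⟩
  · simpa using h ⟨0, by omega⟩ x (by simp [twoDef])
  · exact h ⟨p, by omega⟩ d (by simp [twoDef, hp.ne'])
  · rw [← hlast]
    exact h ⟨m - 1, by omega⟩ y
      (by simp [twoDef, show m - 1 ≠ 0 by omega, show m - 1 ≠ p by omega])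
  · rintro ⟨hx, hd, hy⟩ j z hz
    unfold twoDef at hz
    split_ifs at hz <;> simp_all

lemma periodic_apply_add_one_add_sub_one (hw : Function.Periodic w m) (i : ℤ) :
    w (i + 1 + (m - 1)) = w i := by
  rw [add_add_sub_cancel, hw i]

lemma meets_oneHole_iff_of_periodic (hm : 2 ≤ m) (hw : Function.Periodic w m) :
    Meets w (oneHole m x y) ↔ ∃ i : ℤ, w i = y ∧ w (i + 1) = x := by
  rw [meets_oneHole_iff hm, ← (Equiv.addRight (1 : ℤ)).exists_congr_right]
  simp only [Equiv.coe_addRight, periodic_apply_add_one_add_sub_one hw, and_comm]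

lemma meets_twoDef_iff_of_periodic (hp : 0 < p) (hpm : p + 1 < m) (hw : Function.Periodic w m) :
    Meets w (twoDef m x d y p) ↔ ∃ i : ℤ, w i = y ∧ w (i + 1) = x ∧ w (i + 1 + p) = d := by
  rw [meets_twoDef_iff hp hpm, ← (Equiv.addRight (1 : ℤ)).exists_congr_right]
  simp only [Equiv.coe_addRight, periodic_apply_add_one_add_sub_one hw]
  exact exists_congr fun i ↦ by tauto

end Meets

section Periodic

variable {A : Type} {P : ℕ}

lemma periodic_periodic (P : ℕ) (f : ℕ → A) : Function.Periodic (periodic P f) P := fun i ↦ by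
  simp only [periodic, Int.add_emod_right]

lemma exists_forall_periodic_add (hP : 0 < P) (f : ℕ → A) (i : ℤ) :
    ∃ r < P, periodic P f i = f r ∧ ∀ n : ℕ, periodic P f (i + n) = f ((r + n) % P) := by
  have hP' : (0 : ℤ) < P := by exact_mod_cast hP
  lift i % P to ℕ using Int.emod_nonneg i hP'.ne' with r hr
  refine ⟨r, by have := Int.emod_lt_of_pos i hP'; omega, by rw [periodic, ← hr, Int.toNat_natCast],
    fun n ↦ ?_⟩
  rw [periodic, ← Int.emod_add_emod, ← hr]
  norm_cast

end Periodic

/-- The set of partial words to be avoided, where `x₂ = m - 3 - x₁` and `y₂ = m - 3 - y₁`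
are implicit in the length `m`. -/
def forbidden (m x₁ y₁ : ℕ) : Set (PW m ABC) :=
  {oneHole m a a, oneHole m b b, oneHole m c c,
    twoDef m a b b (x₁ + 1), twoDef m b b c (y₁ + 1), oneHole m a c}

lemma forall_forbidden_not_meets {m x₁ y₁ : ℕ} {w : ℤ → ABC} (hx₁ : x₁ + 3 ≤ m) (hy₁ : y₁ + 3 ≤ m)
    (hw : Function.Periodic w m)
    (hne : ∀ i, w (i + 1) ≠ w i)
    (hca : ∀ i, w i = c → w (i + 1) ≠ a)
    (hbab : ∀ i, w i = b → w (i + 1) = a → w (i + 1 + (x₁ + 1 : ℕ)) ≠ b)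
    (hcbb : ∀ i, w i = c → w (i + 1) = b → w (i + 1 + (y₁ + 1 : ℕ)) ≠ b) :
    ∀ u ∈ forbidden m x₁ y₁, ¬ Meets w u := by
  have not_meets_self (x : ABC) : ¬ Meets w (oneHole m x x) := by
    rw [meets_oneHole_iff_of_periodic (by omega) hw]
    rintro ⟨i, hi, hi'⟩
    exact hne i (hi'.trans hi.symm)
  rintro u (rfl | rfl | rfl | rfl | rfl | rfl)
  · exact not_meets_self a
  · exact not_meets_self b
  · exact not_meets_self c
  · rw [meets_twoDef_iff_of_periodic (by omega) (by omega) hw]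
    rintro ⟨i, hb, ha, hb'⟩
    exact hbab i hb ha hb'
  · rw [meets_twoDef_iff_of_periodic (by omega) (by omega) hw]
    rintro ⟨i, hc, hb, hb'⟩
    exact hcbb i hc hb hb'
  · rw [meets_oneHole_iff_of_periodic (by omega) hw]
    rintro ⟨i, hc, ha⟩
    exact hca i hc ha

/-- The word `⋯bcbc⋯` used for even `m`, with `b` at the even positions. -/
def alternating (i : ℤ) : ABC := if Even i then b else c

lemma alternating_ne_a (i : ℤ) : alternating i ≠ a := by
  unfold alternating; split_ifs <;> simp

lemma alternating_periodic {m : ℕ} (hm : Even m) : Function.Periodic alternating m := fun i ↦ by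
  simp [alternating, Int.even_add, hm]

lemma alternating_add_ne {n : ℕ} (hn : Odd n) (i : ℤ) : alternating (i + n) ≠ alternating i := by
  by_cases hi : Even i <;> simp [alternating, Int.even_add, hi, hn]

lemma alternating_avoids_forbidden {m x₁ y₁ : ℕ} (hx₁ : x₁ + 3 ≤ m) (hy₁ : y₁ + 3 ≤ m)
    (hm : Even m) (hey : Even y₁) :
    ∀ u ∈ forbidden m x₁ y₁, ¬ Meets alternating u := by
  refine forall_forbidden_not_meets hx₁ hy₁ (alternating_periodic hm) ?_ ?_ ?_ ?_
  · exact_mod_cast alternating_add_ne odd_one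
  · exact fun i _ ↦ alternating_ne_a _
  · exact fun i _ ha ↦ absurd ha (alternating_ne_a _)
  · exact fun i _ hb ↦ hb ▸ alternating_add_ne hey.add_one (i + 1)

lemma mod_eq_self_or_sub {n m : ℕ} (h : n < 2 * m) :
    n < m ∧ n % m = n ∨ m ≤ n ∧ n % m = n - m := by
  rcases lt_or_ge n m with hn | hn
  · exact .inl ⟨hn, Nat.mod_eq_of_lt hn⟩
  · exact .inr ⟨hn, by rw [Nat.mod_eq_sub_mod hn, Nat.mod_eq_of_lt (by omega)]⟩

/-- The block `(bc)^(s/2) (ba)^((m-1-s)/2) c` of length `m` used for odd `m`; it has this form when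
`s < m` is even. -/
def oddBlock (m s n : ℕ) : ABC :=
  if n + 1 = m then c else if Even n then b else if n < s then c else a

section OddBlock

variable {m s n x₁ y₁ : ℕ}

lemma oddBlock_eq_a_iff : oddBlock m s n = a ↔ n + 1 ≠ m ∧ Odd n ∧ s ≤ n := by
  grind [oddBlock]

lemma oddBlock_eq_b_iff : oddBlock m s n = b ↔ n + 1 ≠ m ∧ Even n := by
  grind [oddBlock]

lemma oddBlock_eq_c_iff : oddBlock m s n = c ↔ n + 1 = m ∨ Odd n ∧ n < s := by
  grind [oddBlock]

lemma oddBlock_succ_mod_ne (hs : s + 1 < m) (hn : n < m) :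
    oddBlock m s ((n + 1) % m) ≠ oddBlock m s n := by
  rcases mod_eq_self_or_sub (show n + 1 < 2 * m by omega) with ⟨h, hmod⟩ | ⟨h, hmod⟩ <;>
    rw [hmod] <;> grind [oddBlock]

lemma succ_mod_le_and_even_of_oddBlock_eq_c (hn : n < m) (hc : oddBlock m s n = c) :
    (n + 1) % m ≤ s ∧ Even ((n + 1) % m) := by
  rw [oddBlock_eq_c_iff] at hc
  rcases hc with rfl | ⟨hodd, hlt⟩
  · simp
  · rcases mod_eq_self_or_sub (show n + 1 < 2 * m by omega) with ⟨-, hmod⟩ | ⟨-, hmod⟩ <;>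
      rw [hmod] <;> grind

lemma oddBlock_succ_mod_ne_a_of_eq_c (hn : n < m) (hc : oddBlock m s n = c) :
    oddBlock m s ((n + 1) % m) ≠ a := fun ha ↦
  Nat.not_even_iff_odd.2 (oddBlock_eq_a_iff.1 ha).2.1
    (succ_mod_le_and_even_of_oddBlock_eq_c hn hc).2

lemma oddBlock_add_mod_ne_b_of_eq_a (hm : x₁ + s + 3 = m) (hm_odd : Odd m) (hex : Even x₁)
    (hn : n < m) (ha : oddBlock m s n = a) : oddBlock m s ((n + (x₁ + 1)) % m) ≠ b := by
  obtain ⟨-, hn_odd, hsn⟩ := oddBlock_eq_a_iff.1 ha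
  rw [Ne, oddBlock_eq_b_iff]
  rintro ⟨hlast, heven⟩
  rcases mod_eq_self_or_sub (show n + (x₁ + 1) < 2 * m by omega) with ⟨h, hmod⟩ | ⟨h, hmod⟩
  · have hs : Even s := by grind
    have hs_lt : s < n := by grind
    omega
  · have hodd : Odd (n + (x₁ + 1) - m) := by grind
    exact Nat.not_even_iff_odd.2 hodd (hmod ▸ heven)

lemma oddBlock_add_mod_ne_b_of_eq_c (hm : y₁ + s + 1 < m) (hey : Even y₁) (hn : n < m)
    (hc : oddBlock m s n = c) : oddBlock m s ((n + (1 + (y₁ + 1))) % m) ≠ b := by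
  obtain ⟨hle, heven⟩ := succ_mod_le_and_even_of_oddBlock_eq_c hn hc
  have hmod : (n + (1 + (y₁ + 1))) % m = (n + 1) % m + (y₁ + 1) := by
    rw [← add_assoc, ← Nat.mod_add_mod, Nat.mod_eq_of_lt (by omega)]
  have hodd : Odd ((n + 1) % m + (y₁ + 1)) := heven.add_odd hey.add_one
  rw [hmod, Ne, oddBlock_eq_b_iff]
  exact fun hb ↦ Nat.not_even_iff_odd.2 hodd hb.2

lemma periodic_oddBlock_avoids_forbidden (hm : x₁ + s + 3 = m) (hm_odd : Odd m) (hex : Even x₁)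
    (hey : Even y₁) (hyx : y₁ ≤ x₁) :
    ∀ u ∈ forbidden m x₁ y₁, ¬ Meets (periodic m (oddBlock m s)) u := by
  have block (i : ℤ) := exists_forall_periodic_add hm_odd.pos (oddBlock m s) i
  refine forall_forbidden_not_meets (by omega) (by omega) (periodic_periodic _ _)
    (fun i ↦ ?_) (fun i hc ↦ ?_) (fun i _ ha ↦ ?_) (fun i hc _ ↦ ?_)
  · obtain ⟨n, hn, h₀, hadd⟩ := block i
    rw [← Nat.cast_one, hadd, h₀]
    exact oddBlock_succ_mod_ne (by omega) hn
  · obtain ⟨n, hn, h₀, hadd⟩ := block i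
    rw [← Nat.cast_one, hadd]
    exact oddBlock_succ_mod_ne_a_of_eq_c hn (h₀ ▸ hc)
  · obtain ⟨n, hn, h₀, hadd⟩ := block (i + 1)
    rw [hadd]
    exact oddBlock_add_mod_ne_b_of_eq_a hm hm_odd hex hn (h₀ ▸ ha)
  · obtain ⟨n, hn, h₀, hadd⟩ := block i
    rw [add_assoc, ← Nat.cast_one, ← Nat.cast_add, hadd]
    exact oddBlock_add_mod_ne_b_of_eq_c (by omega) hey hn (h₀ ▸ hc)

end OddBlock

theorem stmt_8_general {m x₁ y₁ : ℕ} (hx₁ : x₁ + 3 ≤ m) (hy₁ : y₁ + 3 ≤ m) (hey : Even y₁)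
    (hodd : Odd m → Even x₁ ∧ y₁ ≤ x₁) :
    ∃ w : ℤ → ABC, Function.Periodic w m ∧ ∀ u ∈ forbidden m x₁ y₁, ¬ Meets w u := by
  rcases Nat.even_or_odd m with hm | hm
  · exact ⟨alternating, alternating_periodic hm, alternating_avoids_forbidden hx₁ hy₁ hm hey⟩
  · obtain ⟨hex, hyx⟩ := hodd hm
    obtain ⟨x₂, hx₂⟩ := Nat.exists_eq_add_of_le hx₁
    exact ⟨periodic m (oddBlock m x₂), periodic_periodic _ _,
      periodic_oddBlock_avoids_forbidden (by omega) hm hex hey hyx⟩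

/-- If x₁ and y₁ are even and y₁ ≤ x₂ ≤ x₁, then
{a⋄^(m-2)a, b⋄^(m-2)b, c⋄^(m-2)c, a⋄^(x₁)b⋄^(x₂)b, b⋄^(y₁)b⋄^(y₂)c, a⋄^(m-2)c}
is avoidable by a word of period at most m. -/
theorem stmt_8 (m x₁ x₂ y₁ y₂ : ℕ) (hm : 4 ≤ m)
    (hx₁ : 1 ≤ x₁) (hx₂ : 1 ≤ x₂) (hy₁ : 1 ≤ y₁) (hy₂ : 1 ≤ y₂)
    (hsx : x₁ + x₂ = m - 3) (hsy : y₁ + y₂ = m - 3)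
    (hex : Even x₁) (hey : Even y₁) (hord : y₁ ≤ x₂ ∧ x₂ ≤ x₁) :
    ∃ w : ℤ → ABC, (∃ p : ℕ, 0 < p ∧ p ≤ m ∧ ∀ i : ℤ, w (i + (p : ℕ)) = w i) ∧
      ∀ u ∈ ({oneHole m a a, oneHole m b b, oneHole m c c,
              twoDef m a b b (x₁ + 1), twoDef m b b c (y₁ + 1),
              oneHole m a c} : Set (PW m ABC)), ¬ Meets w u := by
  obtain ⟨w, hw, havoid⟩ := stmt_8_general (m := m) (x₁ := x₁) (y₁ := y₁) (by omega) (by omega) hey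
    fun _ ↦ ⟨hex, hord.1.trans hord.2⟩
  exact ⟨w, ⟨m, by omega, le_rfl, hw⟩, havoid⟩
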